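/- Let β > 1 and let J ⊆ (0, ∞) be a closed interval. The set E^β(J) of pairs (x,y) ∈ [0,1)² for which the set of accumulation points of the sequence ((log W_n^β(x,y))/n)_{n≥1} is exactly J has Hausdorff dimension 2. -/

import Mathlib

open Filter MeasureTheory Set

/-- The β-transformation T_β(x) = βx − ⌊βx⌋. -/
noncomputable def betaT (β : ℝ) : ℝ → ℝ := fun x => β * x - ⌊β * x⌋

/-- The (i+1)-th digit of the β-expansion of x (0-indexed). -/
noncomputable def betaDigit (β x : ℝ) (i : ℕ) : ℤ := ⌊β * (betaT β)^[i] x⌋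

/-- A finite word is β-admissible if some x ∈ [0,1) has β-expansion beginning with it. -/
def IsAdmissibleWord (β : ℝ) (w : List ℤ) : Prop :=
  ∃ x ∈ Set.Ico (0:ℝ) 1, ∀ i (h : i < w.length), w.get ⟨i, h⟩ = betaDigit β x i

/-- An infinite sequence is β-admissible if it is the digit sequence of some x ∈ [0,1). -/
def IsAdmissibleSeq (β : ℝ) (e : ℕ → ℤ) : Prop :=
  ∃ x ∈ Set.Ico (0:ℝ) 1, ∀ i, e i = betaDigit β x i

/-- The basic interval (cylinder) of a word. -/
def cylinder (β : ℝ) (w : List ℤ) : Set ℝ :=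
  {x | x ∈ Set.Ico (0:ℝ) 1 ∧ ∀ i (h : i < w.length), betaDigit β x i = w.get ⟨i, h⟩}

/-- A basic interval is full if its length is β^{-n}. -/
def IsFull (β : ℝ) (w : List ℤ) : Prop :=
  volume (cylinder β w) = ENNReal.ofReal (1 / β ^ w.length)

-- The infinite β-expansion of 1: the periodic modification if the expansion of 1
-- terminates, and the expansion of 1 itself otherwise (0-indexed).
open Classical in
noncomputable def betaStar (β : ℝ) : ℕ → ℤ :=
  if h : ∃ n, betaDigit β 1 n ≠ 0 ∧ ∀ i, n < i → betaDigit β 1 i = 0 then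
    fun i =>
      if i % (h.choose + 1) = h.choose then betaDigit β 1 h.choose - 1
      else betaDigit β 1 (i % (h.choose + 1))
  else betaDigit β 1

/-- Strict lexicographic order on integer sequences. -/
def lexLt (a b : ℕ → ℤ) : Prop := ∃ n, (∀ i, i < n → a i = b i) ∧ a n < b n

/-- l_n(β): the length of the longest run of zeros following the n-th digit
(1-indexed position n) in the infinite β-expansion of 1. -/
noncomputable def zeroRunLen (β : ℝ) (n : ℕ) : ℕ∞ :=
  ⨆ k ∈ {k : ℕ | ∀ j, j < k → betaStar β (n + j) = 0}, (k : ℕ∞)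

/-- A₀: the set of bases β > 1 with bounded zero-runs in the expansion of 1. -/
def A0 : Set ℝ := {β | 1 < β ∧ ∃ C : ℕ, ∀ n, 1 ≤ n → zeroRunLen β n ≤ (C : ℕ∞)}

/-- The waiting time W_n^β(x,y): first k ≥ 1 with T_β^k x in the n-th basic interval of y. -/
noncomputable def waitingTime (β x y : ℝ) (n : ℕ) : ℕ∞ :=
  sInf {k : ℕ∞ | ∃ m : ℕ, k = (m : ℕ∞) ∧ 1 ≤ m ∧
    ∀ i, i < n → betaDigit β ((betaT β)^[m] x) i = betaDigit β y i}

/-- (log W_n^β(x,y)) / n as an extended real, with value ⊤ when W_n = ∞. -/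
noncomputable def waitingRatio (β x y : ℝ) (n : ℕ) : EReal :=
  if h : waitingTime β x y n = ⊤ then ⊤
  else (((Real.log ((waitingTime β x y n).untop h : ℕ)) / n : ℝ) : EReal)

/-!
Basic intervals of full length can be concatenated freely, and more than `β ^ (θ * (N + 1))` of
order `N` exist for every `θ < 1` and suitable `N`. So two free sequences `ξ`, `η` of full blocks
code a pair `(x, y)`: `y` has the blocks of `η` after three zero blocks, and `x` has the blocks of
`ξ`, interrupted by copies of the first `k` blocks of `y` planted at sparse block positions `p k`.
As `ξ` and `η` avoid the zero block, the leading zero blocks reveal where the copies are, and the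
zero block closing a copy ends it exactly. Hence for `n` between `k` and `k + 1` blocks the waiting
time lies between the starts of the copies `k` and `k + 1`. Taking `p k ≈ exp (n * osc n)`, where
`osc` oscillates ever more slowly between `u` and `v`, makes the ratios sweep out `[u, v]`. Since
`p` grows exponentially, the copies have density zero, so `(ξ, η)` depends on `(x, y)` in an almost
Lipschitz way when sequences are read as expansions in base the number of blocks. These expansions
fill the unit square, whose dimension therefore bounds that of the coded pairs from below.
-/

section BetaTransformation

variable {β : ℝ}

lemma betaT_mem_Ico (β x : ℝ) : betaT β x ∈ Ico (0 : ℝ) 1 :=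
  ⟨Int.fract_nonneg _, Int.fract_lt_one _⟩

lemma floor_mul_natCast_add_div (hβ : β ≠ 0) (d : ℕ) {s : ℝ} (hs : s ∈ Ico (0 : ℝ) 1) :
    ⌊β * ((d + s) / β)⌋ = d := by
  rw [mul_div_cancel₀ _ hβ, Int.floor_natCast_add, Int.floor_eq_zero_iff.2 hs, add_zero]

lemma betaT_natCast_add_div (hβ : β ≠ 0) (d : ℕ) {s : ℝ} (hs : s ∈ Ico (0 : ℝ) 1) :
    betaT β ((d + s) / β) = s := by
  rw [betaT, floor_mul_natCast_add_div hβ d hs, mul_div_cancel₀ _ hβ]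
  simp only [Int.cast_natCast, add_sub_cancel_left]

lemma betaDigit_iterate (β x : ℝ) (m i : ℕ) :
    betaDigit β ((betaT β)^[m] x) i = betaDigit β x (m + i) := by
  rw [betaDigit, betaDigit, ← Function.iterate_add_apply, add_comm]

lemma betaDigit_succ (β x : ℝ) (i : ℕ) : betaDigit β x (i + 1) = betaDigit β (betaT β x) i := by
  rw [betaDigit, betaDigit, Function.iterate_succ_apply]

lemma betaT_iterate_eq_pow_mul {x : ℝ} {n : ℕ} (h : ∀ i < n, betaDigit β x i = 0) :
    (betaT β)^[n] x = β ^ n * x := by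
  induction n with
  | zero => simp
  | succ n ih =>
    have hn : ⌊β * (betaT β)^[n] x⌋ = 0 := h n n.lt_succ_self
    rw [Function.iterate_succ_apply', betaT, hn, ih fun i hi => h i (hi.trans n.lt_succ_self)]
    ring

lemma betaDigit_zero (β : ℝ) (i : ℕ) : betaDigit β 0 i = 0 := by
  rw [betaDigit, Function.iterate_fixed (by simp [betaT])]
  simp

end BetaTransformation

/-! ### Full cylinders -/

/-- `a` is the left endpoint of a full basic interval of order `n`: the interval
`[a, a + β⁻ⁿ)` lies in `[0, 1)`, its points share their first `n` digits, and `T_βⁿ` maps it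
affinely onto `[0, 1)`. -/
structure IsFullStart (β : ℝ) (n : ℕ) (a : ℝ) : Prop where
  nonneg : 0 ≤ a
  add_le_one : a + (β ^ n)⁻¹ ≤ 1
  iterate : ∀ t ∈ Ico (0 : ℝ) 1, (betaT β)^[n] (a + t / β ^ n) = t
  digit : ∀ t ∈ Ico (0 : ℝ) 1, ∀ i < n, betaDigit β (a + t / β ^ n) i = betaDigit β a i

namespace IsFullStart

variable {β a b : ℝ} {n : ℕ}

lemma iterate_self (ha : IsFullStart β n a) : (betaT β)^[n] a = 0 := by
  simpa using ha.iterate 0 ⟨le_rfl, one_pos⟩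

lemma add_div_pow_mem_Ico (hβ : 0 < β) (ha : IsFullStart β n a) {t : ℝ}
    (ht : t ∈ Ico (0 : ℝ) 1) : a + t / β ^ n ∈ Ico (0 : ℝ) 1 := by
  have hlt : t / β ^ n < (β ^ n)⁻¹ := by
    rw [div_eq_mul_inv]; exact mul_lt_of_lt_one_left (by positivity) ht.2
  exact ⟨add_nonneg ha.nonneg (div_nonneg ht.1 (by positivity)), by linarith [ha.add_le_one]⟩

lemma mem_Ico (hβ : 0 < β) (ha : IsFullStart β n a) : a ∈ Ico (0 : ℝ) 1 := by
  simpa using ha.add_div_pow_mem_Ico hβ (t := 0) ⟨le_rfl, one_pos⟩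

lemma order_zero (β : ℝ) : IsFullStart β 0 0 where
  nonneg := le_rfl
  add_le_one := by simp
  iterate := by simp
  digit := by simp

lemma cons (hβ : 0 < β) (hb : IsFullStart β n b) (d : ℕ) (h : d + b + (β ^ n)⁻¹ ≤ β) :
    IsFullStart β (n + 1) ((d + b) / β) := by
  have cons_add : ∀ t : ℝ, (d + b) / β + t / β ^ (n + 1) = (d + (b + t / β ^ n)) / β := by
    intro t; field_simp; ring
  refine ⟨div_nonneg (add_nonneg d.cast_nonneg hb.nonneg) hβ.le, ?_, fun t ht => ?_,
    fun t ht i hi => ?_⟩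
  · rw [pow_succ, mul_inv, ← div_eq_mul_inv, ← add_div, div_le_one hβ]
    exact h
  · rw [cons_add, Function.iterate_succ_apply,
      betaT_natCast_add_div hβ.ne' d (hb.add_div_pow_mem_Ico hβ ht), hb.iterate t ht]
  · rw [cons_add]
    have ht' := hb.add_div_pow_mem_Ico hβ ht
    cases i with
    | zero =>
      simp only [betaDigit, Function.iterate_zero, id]
      rw [floor_mul_natCast_add_div hβ.ne' d ht',
        floor_mul_natCast_add_div hβ.ne' d (hb.mem_Ico hβ)]
    | succ i =>
      rw [betaDigit_succ, betaDigit_succ, betaT_natCast_add_div hβ.ne' d ht',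
        betaT_natCast_add_div hβ.ne' d (hb.mem_Ico hβ)]
      exact hb.digit t ht i (Nat.succ_lt_succ_iff.1 hi)

lemma div_base (hβ : 1 < β) (hb : IsFullStart β n b) : IsFullStart β (n + 1) (b / β) := by
  have := hb.cons (zero_lt_one.trans hβ) 0 (by
    rw [Nat.cast_zero, zero_add]; exact hb.add_le_one.trans hβ.le)
  simpa using this

lemma zero (hβ : 1 < β) (n : ℕ) : IsFullStart β n 0 := by
  induction n with
  | zero => exact order_zero β
  | succ n ih => simpa using ih.div_base hβ

lemma eq_zero_of_digits (hβ : β ≠ 0) (ha : IsFullStart β n a)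
    (h : ∀ i < n, betaDigit β a i = 0) : a = 0 := by
  have hpow : β ^ n * a = 0 := by rw [← betaT_iterate_eq_pow_mul h, ha.iterate_self]
  exact (mul_eq_zero.1 hpow).resolve_left (pow_ne_zero n hβ)

lemma inv_pow_le_sub (hβ : 0 < β) (ha : IsFullStart β n a) (hb : IsFullStart β n b)
    (hab : a < b) : (β ^ n)⁻¹ ≤ b - a := by
  by_contra! hlt
  have ht : (b - a) * β ^ n ∈ Ico (0 : ℝ) 1 :=
    ⟨mul_nonneg (sub_nonneg.2 hab.le) (by positivity), by
      rwa [← lt_inv_mul_iff₀' (by positivity), mul_one]⟩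
  have hiter := ha.iterate _ ht
  rw [mul_div_cancel_right₀ _ (by positivity), add_sub_cancel, hb.iterate_self] at hiter
  exact (mul_pos (sub_pos.2 hab) (by positivity)).ne hiter

lemma finite_setOf (hβ : 0 < β) (n : ℕ) : {a | IsFullStart β n a}.Finite := by
  refine Set.Finite.of_injOn (f := fun a => ⌊β ^ n * a⌋) (t := Icc 0 ⌊β ^ n⌋) ?_ ?_
    (finite_Icc _ _)
  · intro a ha
    have hmul : β ^ n * a ≤ β ^ n :=
      mul_le_of_le_one_right (by positivity) (IsFullStart.mem_Ico hβ ha).2.le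
    exact ⟨Int.floor_nonneg.2 (mul_nonneg (by positivity) (IsFullStart.nonneg ha)),
      Int.floor_le_floor hmul⟩
  · intro a ha b hb hab
    have hlt := Int.abs_sub_lt_one_of_floor_eq_floor hab
    rw [← mul_sub, abs_mul, abs_of_pos (by positivity), ← lt_inv_mul_iff₀ (by positivity),
      mul_one] at hlt
    rcases lt_trichotomy a b with h | h | h
    · have := inv_pow_le_sub hβ ha hb h
      rw [abs_sub_comm, abs_of_pos (sub_pos.2 h)] at hlt
      linarith
    · exact h
    · have := inv_pow_le_sub hβ hb ha h
      rw [abs_of_pos (sub_pos.2 h)] at hlt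
      linarith

-- Greedy step: prefixing the first digit of `x` to a full interval either keeps it full or makes
-- it stick out of `[0, 1)`; in the latter case `x` lies within `β⁻⁽ᴺ⁺¹⁾` of `1`.
lemma exists_near_right_end (hβ : 1 < β) (N : ℕ) {x : ℝ} (hx : x ∈ Ico (0 : ℝ) 1) :
    ∃ n ≤ N, ∃ a, IsFullStart β n a ∧
      x ∈ Ico (a + (β ^ n)⁻¹ - (β ^ N)⁻¹) (a + (β ^ n)⁻¹) := by
  have hβ0 : 0 < β := zero_lt_one.trans hβ
  induction N generalizing x with
  | zero => exact ⟨0, le_rfl, 0, order_zero β, by simpa using hx⟩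
  | succ N ih =>
    obtain ⟨n, hn, b, hb, hbx⟩ := ih (betaT_mem_Ico β x)
    obtain ⟨d, hd⟩ := Int.eq_ofNat_of_zero_le (Int.floor_nonneg.2 (mul_nonneg hβ0.le hx.1))
    have hx_eq : x = (d + betaT β x) / β := by
      rw [eq_div_iff hβ0.ne', betaT, hd]; push_cast; ring
    have pow_succ_inv : ∀ k : ℕ, (β ^ (k + 1))⁻¹ = (β ^ k)⁻¹ / β := fun k => by
      rw [pow_succ, mul_inv, div_eq_mul_inv]
    by_cases hfull : d + b + (β ^ n)⁻¹ ≤ β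
    · refine ⟨n + 1, by omega, _, hb.cons hβ0 d hfull, ?_⟩
      rw [hx_eq, pow_succ_inv, pow_succ_inv, ← add_div, ← sub_div]
      exact ⟨div_le_div_of_nonneg_right (by linarith [hbx.1]) hβ0.le,
        div_lt_div_of_pos_right (by linarith [hbx.2]) hβ0⟩
    · refine ⟨0, by omega, 0, order_zero β, ?_, by simpa using hx.2⟩
      rw [hx_eq, pow_succ_inv, pow_zero, inv_one, zero_add, sub_le_iff_le_add, ← add_div,
        le_div_iff₀ hβ0]
      linarith [hbx.1]

lemma ncard_mono (hβ : 1 < β) : Monotone fun n => {a | IsFullStart β n a}.ncard := by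
  have hβ0 : 0 < β := zero_lt_one.trans hβ
  exact monotone_nat_of_le_succ fun n =>
    ncard_le_ncard_of_injOn (· / β) (fun b hb => IsFullStart.div_base hβ hb)
      (fun _ _ _ _ h => (div_left_inj' hβ0.ne').1 h) (finite_setOf hβ0 _)

lemma pow_le_ncard (hβ : 1 < β) (N : ℕ) :
    β ^ N ≤ (N + 1) * ({a | IsFullStart β N a}.ncard : ℝ) := by
  have hβ0 : 0 < β := zero_lt_one.trans hβ
  let F : ℕ → Finset ℝ := fun n => (finite_setOf hβ0 n).toFinset
  have hFcard : ∀ n ≤ N, ((F n).card : ℝ) ≤ {a | IsFullStart β N a}.ncard := fun n hn => by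
    rw [← ncard_eq_toFinset_card _ (finite_setOf hβ0 n)]; exact_mod_cast ncard_mono hβ hn
  let I : ℕ → ℝ → Set ℝ := fun n a => Ico (a + (β ^ n)⁻¹ - (β ^ N)⁻¹) (a + (β ^ n)⁻¹)
  have hvolI : ∀ n a, volume.real (I n a) = (β ^ N)⁻¹ := fun n a => by
    rw [Real.volume_real_Ico_of_le (by linarith [show 0 < (β ^ N)⁻¹ by positivity])]; ring
  have hcover : Ico (0 : ℝ) 1 ⊆ ⋃ n ∈ Finset.range (N + 1), ⋃ a ∈ F n, I n a := by
    intro x hx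
    obtain ⟨n, hn, a, ha, hxa⟩ := exists_near_right_end hβ N hx
    simp only [mem_iUnion]
    exact ⟨n, Finset.mem_range.2 (Nat.lt_succ_of_le hn), a,
      (finite_setOf hβ0 n).mem_toFinset.2 ha, hxa⟩
  have hfin : volume (⋃ n ∈ Finset.range (N + 1), ⋃ a ∈ F n, I n a) ≠ ⊤ :=
    ((measure_biUnion_lt_top (Finset.finite_toSet _) fun n _ =>
      measure_biUnion_lt_top (Finset.finite_toSet _) fun a _ => measure_Ico_lt_top)).ne
  have hone : 1 ≤ (N + 1) * ({a | IsFullStart β N a}.ncard * (β ^ N)⁻¹) := calc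
    (1 : ℝ) = volume.real (Ico (0 : ℝ) 1) := by simp
    _ ≤ volume.real (⋃ n ∈ Finset.range (N + 1), ⋃ a ∈ F n, I n a) := measureReal_mono hcover hfin
    _ ≤ ∑ n ∈ Finset.range (N + 1), ∑ a ∈ F n, volume.real (I n a) :=
      (measureReal_biUnion_finset_le _ _).trans <|
        Finset.sum_le_sum fun n _ => measureReal_biUnion_finset_le _ _
    _ ≤ ∑ _n ∈ Finset.range (N + 1), {a | IsFullStart β N a}.ncard * (β ^ N)⁻¹ := by
      refine Finset.sum_le_sum fun n hn => ?_
      simp only [hvolI, Finset.sum_const, nsmul_eq_mul]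
      refine mul_le_mul_of_nonneg_right ?_ (by positivity)
      exact hFcard n (Nat.le_of_lt_succ (Finset.mem_range.1 hn))
    _ = _ := by simp
  rw [← mul_assoc, ← div_eq_mul_inv, le_div_iff₀ (by positivity), one_mul] at hone
  exact hone

end IsFullStart

/-! ### Concatenation of full blocks -/

/-- The point whose `β`-expansion is the concatenation of the words of length `L` starting the
expansions of `c 0, c 1, …`. It is used with `L = N + 1` and `c i` the left endpoint of a full
interval of order `N`: each block then ends in an extra digit `0`, which keeps the points below `1`
and leaves gaps between blocks. -/
noncomputable def blockSum (β : ℝ) (L : ℕ) (c : ℕ → ℝ) : ℝ := ∑' i, c i / (β ^ L) ^ i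

section BlockSum

variable {β : ℝ} {N : ℕ} {c c' : ℕ → ℝ}

lemma inv_pow_succ_lt_inv_pow (hβ : 1 < β) (N : ℕ) : (β ^ (N + 1))⁻¹ < (β ^ N)⁻¹ :=
  inv_strictAnti₀ (by positivity) (pow_lt_pow_right₀ hβ N.lt_succ_self)

lemma summable_const_div_pow (hβ : 1 < β) (N : ℕ) (b : ℝ) :
    Summable fun i : ℕ => b / (β ^ (N + 1)) ^ i := by
  simpa only [div_eq_mul_inv, inv_pow] using (summable_geometric_of_lt_one (by positivity)
    (inv_lt_one_of_one_lt₀ (one_lt_pow₀ hβ N.succ_ne_zero))).mul_left b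

lemma block_div_pow_le (hβ : 1 < β) (hc : ∀ i, IsFullStart β N (c i)) (i : ℕ) :
    c i / (β ^ (N + 1)) ^ i ≤ (1 - (β ^ N)⁻¹) / (β ^ (N + 1)) ^ i :=
  div_le_div_of_nonneg_right (by linarith [(hc i).add_le_one]) (by positivity)

lemma block_div_pow_nonneg (hβ : 1 < β) (hc : ∀ i, IsFullStart β N (c i)) (i : ℕ) :
    0 ≤ c i / (β ^ (N + 1)) ^ i :=
  div_nonneg (hc i).nonneg (by positivity)

lemma summable_block_div_pow (hβ : 1 < β) (hc : ∀ i, IsFullStart β N (c i)) :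
    Summable fun i => c i / (β ^ (N + 1)) ^ i :=
  .of_nonneg_of_le (block_div_pow_nonneg hβ hc) (block_div_pow_le hβ hc)
    (summable_const_div_pow hβ N _)

lemma blockSum_mem_Ico (hβ : 1 < β) (hc : ∀ i, IsFullStart β N (c i)) :
    blockSum β (N + 1) c ∈ Ico (0 : ℝ) 1 := by
  refine ⟨tsum_nonneg (block_div_pow_nonneg hβ hc), ?_⟩
  have hlt : (β ^ (N + 1))⁻¹ < 1 := inv_lt_one_of_one_lt₀ (one_lt_pow₀ hβ N.succ_ne_zero)
  calc blockSum β (N + 1) c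
      ≤ ∑' i : ℕ, (1 - (β ^ N)⁻¹) / (β ^ (N + 1)) ^ i :=
        (summable_block_div_pow hβ hc).tsum_le_tsum (block_div_pow_le hβ hc)
          (summable_const_div_pow hβ N _)
    _ = (1 - (β ^ N)⁻¹) / (1 - (β ^ (N + 1))⁻¹) := by
        simp only [div_eq_mul_inv _ ((β ^ (N + 1)) ^ _), ← inv_pow (β ^ (N + 1))]
        rw [tsum_mul_left, tsum_geometric_of_lt_one (by positivity) hlt,
          div_eq_mul_inv]
    _ < 1 := by
        rw [div_lt_one (sub_pos.2 hlt)]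
        linarith [inv_pow_succ_lt_inv_pow hβ N]

lemma blockSum_eq_head_add (hβ : 1 < β) (hc : ∀ i, IsFullStart β N (c i)) :
    blockSum β (N + 1) c = c 0 + blockSum β (N + 1) (fun i => c (i + 1)) / β ^ (N + 1) := by
  unfold blockSum
  rw [(summable_block_div_pow hβ hc).tsum_eq_zero_add, ← tsum_div_const, pow_zero, div_one]
  congr 1
  exact tsum_congr fun i => by rw [pow_succ (β ^ (N + 1)) i, div_div]

lemma IsFullStart.succ (hβ : 1 < β) {a : ℝ} {n : ℕ} (ha : IsFullStart β n a) :
    IsFullStart β (n + 1) a := by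
  have hβ0 : 0 < β := zero_lt_one.trans hβ
  have div_mem : ∀ t ∈ Ico (0 : ℝ) 1, t / β ∈ Ico (0 : ℝ) 1 := fun t ht =>
    ⟨div_nonneg ht.1 hβ0.le, (div_le_self ht.1 hβ.le).trans_lt ht.2⟩
  have div_div_pow : ∀ t : ℝ, t / β ^ (n + 1) = t / β / β ^ n := fun t => by
    rw [pow_succ', div_div]
  refine ⟨ha.nonneg, ?_, fun t ht => ?_, fun t ht i hi => ?_⟩
  · linarith [ha.add_le_one, inv_pow_succ_lt_inv_pow hβ n]
  · rw [Function.iterate_succ_apply', div_div_pow, ha.iterate _ (div_mem t ht)]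
    simpa using betaT_natCast_add_div hβ0.ne' 0 ht
  · rw [div_div_pow]
    rcases Nat.lt_succ_iff_lt_or_eq.1 hi with hlt | rfl
    · exact ha.digit _ (div_mem t ht) i hlt
    · rw [betaDigit, betaDigit, ha.iterate _ (div_mem t ht), ha.iterate_self]
      simpa using floor_mul_natCast_add_div hβ0.ne' 0 ht

lemma iterate_blockSum (hβ : 1 < β) (hc : ∀ i, IsFullStart β N (c i)) (q : ℕ) :
    (betaT β)^[q * (N + 1)] (blockSum β (N + 1) c) = blockSum β (N + 1) fun i => c (q + i) := by
  induction q generalizing c with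
  | zero => simp
  | succ q ih =>
    have htail := blockSum_mem_Ico hβ fun i => hc (i + 1)
    rw [Nat.succ_mul, Function.iterate_add_apply, blockSum_eq_head_add hβ hc,
      ((hc 0).succ hβ).iterate _ htail, ih fun i => hc (i + 1)]
    simp only [add_right_comm]

lemma betaDigit_blockSum (hβ : 1 < β) (hc : ∀ i, IsFullStart β N (c i)) (q : ℕ) {i : ℕ}
    (hi : i < N + 1) :
    betaDigit β (blockSum β (N + 1) c) (q * (N + 1) + i) = betaDigit β (c q) i := by
  rw [← betaDigit_iterate, iterate_blockSum hβ hc q, blockSum_eq_head_add hβ fun i => hc (q + i)]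
  exact ((hc q).succ hβ).digit _ (blockSum_mem_Ico hβ fun i => hc (q + (i + 1))) i hi

lemma block_eq_zero_of_digits (hβ : 1 < β) (hc : ∀ i, IsFullStart β N (c i)) {q : ℕ}
    (h : ∀ i < N + 1, betaDigit β (blockSum β (N + 1) c) (q * (N + 1) + i) = 0) : c q = 0 :=
  (hc q).eq_zero_of_digits (zero_lt_one.trans hβ).ne' fun i hi => by
    rw [← betaDigit_blockSum hβ hc q (hi.trans N.lt_succ_self)]
    exact h i (hi.trans N.lt_succ_self)

lemma blockSum_sub_ge_of_head_lt (hβ : 1 < β) (hc : ∀ i, IsFullStart β N (c i))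
    (hc' : ∀ i, IsFullStart β N (c' i)) (h : c 0 < c' 0) :
    (β ^ N)⁻¹ - (β ^ (N + 1))⁻¹ ≤ blockSum β (N + 1) c' - blockSum β (N + 1) c := by
  have hsep := (hc 0).inv_pow_le_sub (zero_lt_one.trans hβ) (hc' 0) h
  have htail := blockSum_mem_Ico hβ fun i => hc (i + 1)
  have htail' := blockSum_mem_Ico hβ fun i => hc' (i + 1)
  have upper : blockSum β (N + 1) (fun i => c (i + 1)) / β ^ (N + 1) ≤ (β ^ (N + 1))⁻¹ := by
    rw [div_eq_mul_inv]; exact mul_le_of_le_one_left (by positivity) htail.2.le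
  have lower : 0 ≤ blockSum β (N + 1) (fun i => c' (i + 1)) / β ^ (N + 1) :=
    div_nonneg htail'.1 (by positivity)
  rw [blockSum_eq_head_add hβ hc, blockSum_eq_head_add hβ hc']
  linarith

lemma le_abs_blockSum_sub (hβ : 1 < β) (hc : ∀ i, IsFullStart β N (c i))
    (hc' : ∀ i, IsFullStart β N (c' i)) {q : ℕ} (heq : ∀ i < q, c i = c' i) (hne : c q ≠ c' q) :
    ((β ^ N)⁻¹ - (β ^ (N + 1))⁻¹) * ((β ^ (N + 1)) ^ q)⁻¹ ≤
      |blockSum β (N + 1) c - blockSum β (N + 1) c'| := by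
  induction q generalizing c c' with
  | zero =>
    rw [pow_zero, inv_one, mul_one]
    rcases hne.lt_or_gt with h | h
    · rw [abs_sub_comm]
      exact (blockSum_sub_ge_of_head_lt hβ hc hc' h).trans (le_abs_self _)
    · exact (blockSum_sub_ge_of_head_lt hβ hc' hc h).trans (le_abs_self _)
  | succ q ih =>
    have htail := ih (fun i => hc (i + 1)) (fun i => hc' (i + 1))
      (fun i hi => heq (i + 1) (Nat.succ_lt_succ hi)) hne
    rw [blockSum_eq_head_add hβ hc, blockSum_eq_head_add hβ hc', heq 0 q.succ_pos,
      add_sub_add_left_eq_sub, ← sub_div, abs_div, abs_of_pos (by positivity : 0 < β ^ (N + 1)),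
      pow_succ _ q, mul_inv, ← mul_assoc, ← div_eq_mul_inv]
    exact div_le_div_of_nonneg_right htail (by positivity)

lemma le_mul_abs_blockSum_sub_rpow (hβ : 1 < β) {r C D : ℝ} (hr : 0 < r) (hC : 0 ≤ C)
    (hc : ∀ i, IsFullStart β N (c i)) (hc' : ∀ i, IsFullStart β N (c' i))
    (hD : ∀ q, (∀ i < q, c i = c' i) → D ≤ C * ((β ^ (N + 1)) ^ q)⁻¹ ^ r) :
    D ≤ C / ((β ^ N)⁻¹ - (β ^ (N + 1))⁻¹) ^ r *
      |blockSum β (N + 1) c - blockSum β (N + 1) c'| ^ r := by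
  have hgap : 0 < (β ^ N)⁻¹ - (β ^ (N + 1))⁻¹ := sub_pos.2 (inv_pow_succ_lt_inv_pow hβ N)
  by_cases hcc : ∃ q, c q ≠ c' q
  · classical
    have hbefore : ∀ i < Nat.find hcc, c i = c' i := fun i hi => not_not.1 (Nat.find_min hcc hi)
    have hsep := le_abs_blockSum_sub hβ hc hc' hbefore (Nat.find_spec hcc)
    refine (hD _ hbefore).trans ?_
    rw [div_mul_eq_mul_div, le_div_iff₀ (by positivity), mul_assoc,
      ← Real.mul_rpow (by positivity) hgap.le, mul_comm _ (_ - _)]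
    gcongr
  · push Not at hcc
    have hlim : Tendsto (fun q : ℕ => C * ((β ^ (N + 1)) ^ q)⁻¹ ^ r) atTop (nhds (C * 0 ^ r)) := by
      have hinv : Tendsto (fun q : ℕ => ((β ^ (N + 1)) ^ q)⁻¹) atTop (nhds 0) :=
        tendsto_inv_atTop_zero.comp
          (tendsto_pow_atTop_atTop_of_one_lt (one_lt_pow₀ hβ N.succ_ne_zero))
      exact ((Real.continuousAt_rpow_const 0 r (Or.inr hr.le)).tendsto.comp hinv).const_mul C
    rw [Real.zero_rpow hr.ne', mul_zero] at hlim
    exact (ge_of_tendsto' hlim fun q => hD q fun i _ => hcc i).trans (by positivity)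

end BlockSum

/-! ### Planting copies in a sequence -/

/-- The sequence `0, 0, 0, η 0, η 1, …`: the three leading zeros mark the start of a copy. -/
def zeroPad {α : Type*} [Zero α] (η : ℕ → α) (i : ℕ) : α := if i < 3 then 0 else η (i - 3)

/-- The index of the last copy starting at or before position `q`, when copy `k` starts at position
`p k`; it is `0` if there is no such copy. -/
def lastCopy (p : ℕ → ℕ) (q : ℕ) : ℕ := Nat.findGreatest (fun k => p k ≤ q) q

/-- Position `q` belongs to a planted copy. Copy `k` occupies the positions `p k, …, p k + k`, and
only the copies with `4 ≤ k`, long enough to contain a letter after the three leading zeros, are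
planted. -/
def InCopy (p : ℕ → ℕ) (q : ℕ) : Prop :=
  4 ≤ lastCopy p q ∧ q ≤ p (lastCopy p q) + lastCopy p q

instance (p : ℕ → ℕ) : DecidablePred (InCopy p) :=
  fun _ => inferInstanceAs (Decidable (_ ∧ _))

/-- The sequence obtained from `ξ` by inserting, for each `k ≥ 4`, the first `k` letters of `Y`
followed by a `0` at positions `p k, …, p k + k`. -/
def plant {α : Type*} [Zero α] (p : ℕ → ℕ) (ξ Y : ℕ → α) (q : ℕ) : α :=
  if InCopy p q then
    if q < p (lastCopy p q) + lastCopy p q then Y (q - p (lastCopy p q)) else 0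
  else ξ (Nat.count (fun i => ¬ InCopy p i) q)

section Plant

variable {α : Type*} [Zero α] {p : ℕ → ℕ} {k q : ℕ} {ξ ξ' η η' Y Y' : ℕ → α}

lemma strictMono_of_spaced (hp : ∀ k, p k + k + 1 < p (k + 1)) : StrictMono p :=
  strictMono_nat_of_lt_succ fun k => by have := hp k; omega

lemma lastCopy_eq (hp : StrictMono p) (hle : p k ≤ q) (hlt : q < p (k + 1)) :
    lastCopy p q = k :=
  Nat.findGreatest_eq_iff.2 ⟨(hp.le_apply).trans hle, fun _ => hle, fun _ hj _ =>
    not_le.2 (hlt.trans_le (hp.monotone hj))⟩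

lemma lastCopy_mono (p : ℕ → ℕ) : Monotone (lastCopy p) := fun _ _ h =>
  Nat.findGreatest_mono (fun _ hk => hk.trans h) h

lemma start_lastCopy_le (h : lastCopy p q ≠ 0) : p (lastCopy p q) ≤ q :=
  Nat.findGreatest_of_ne_zero (P := fun k => p k ≤ q) rfl h

lemma plant_add (hp : ∀ k, p k + k + 1 < p (k + 1)) (hk : 4 ≤ k) {i : ℕ} (hi : i ≤ k) :
    plant p ξ Y (p k + i) = if i < k then Y i else 0 := by
  have hlast : lastCopy p (p k + i) = k :=
    lastCopy_eq (strictMono_of_spaced hp) (by omega) (by have := hp k; omega)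
  have hin : InCopy p (p k + i) := by
    rw [InCopy, hlast]
    omega
  simp only [plant, if_pos hin, hlast, add_lt_add_iff_left, Nat.add_sub_cancel_left]

lemma plant_of_not_inCopy (h : ¬ InCopy p q) :
    plant p ξ Y q = ξ (Nat.count (fun i => ¬ InCopy p i) q) :=
  if_neg h

lemma not_inCopy_add_self_succ (hp : ∀ k, p k + k + 1 < p (k + 1)) (k : ℕ) :
    ¬ InCopy p (p k + k + 1) := by
  rw [InCopy, lastCopy_eq (strictMono_of_spaced hp) (by omega) (hp k)]
  omega

lemma zeroPad_ne_zero (hη : ∀ i, η i ≠ 0) (hq : 3 ≤ q) : zeroPad η q ≠ 0 := by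
  rw [zeroPad, if_neg (by omega)]
  exact hη _

lemma plant_ne_zero_of_not_inCopy (hξ : ∀ i, ξ i ≠ 0) (h : ¬ InCopy p q) :
    plant p ξ Y q ≠ 0 := by
  rw [plant_of_not_inCopy h]
  exact hξ _

lemma exists_start_of_plant_eq_zero (hp : ∀ k, p k + k + 1 < p (k + 1)) (hξ : ∀ i, ξ i ≠ 0)
    (hη : ∀ i, η i ≠ 0) (h₀ : plant p ξ (zeroPad η) q = 0)
    (h₁ : plant p ξ (zeroPad η) (q + 1) = 0) : ∃ k, 4 ≤ k ∧ (q = p k ∨ q = p k + 1) := by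
  obtain ⟨hk, hq⟩ : InCopy p q := not_not.1 fun h => plant_ne_zero_of_not_inCopy hξ h h₀
  refine ⟨lastCopy p q, hk, ?_⟩
  obtain ⟨i, hi⟩ := Nat.exists_eq_add_of_le (start_lastCopy_le (Nat.ne_zero_of_lt hk))
  generalize lastCopy p q = k at hk hq hi ⊢
  subst hi
  by_contra! hne
  rcases (by omega : i + 1 < k ∨ i + 1 = k ∨ i = k) with hlt | rfl | rfl
  · rw [add_assoc, plant_add hp hk (by omega), if_pos hlt] at h₁
    exact zeroPad_ne_zero hη (by omega) h₁
  · rw [plant_add hp hk (by omega), if_pos i.lt_succ_self] at h₀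
    exact zeroPad_ne_zero hη (by omega) h₀
  · exact plant_ne_zero_of_not_inCopy hξ (not_inCopy_add_self_succ hp i) h₁

lemma eq_of_plant_eq (h : ∀ i < q, plant p ξ Y i = plant p ξ' Y' i) :
    ∀ i < Nat.count (fun i => ¬ InCopy p i) q, ξ i = ξ' i := by
  intro i hi
  have hcard : ∀ hf : {i | ¬ InCopy p i}.Finite, i < hf.toFinset.card :=
    fun hf => hi.trans_le (Nat.count_le_card hf q)
  have hpos := h _ (Nat.nth_lt_of_lt_count hi)
  rwa [plant_of_not_inCopy (Nat.nth_mem i hcard), plant_of_not_inCopy (Nat.nth_mem i hcard),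
    Nat.count_nth hcard] at hpos

lemma eq_of_zeroPad_eq (h : ∀ i < q, zeroPad η i = zeroPad η' i) :
    ∀ i < q - 3, η i = η' i := fun i hi => by
  simpa [zeroPad] using h (i + 3) (by omega)

lemma count_inCopy_le (p : ℕ → ℕ) (q : ℕ) :
    Nat.count (InCopy p) q ≤ lastCopy p q * (lastCopy p q + 1) := by
  have hcard : (Finset.Ioc 0 (lastCopy p q) ×ˢ Finset.range (lastCopy p q + 1)).card =
      lastCopy p q * (lastCopy p q + 1) := by
    simp only [Finset.card_product, Nat.card_Ioc, Nat.sub_zero, Finset.card_range]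
  rw [Nat.count_eq_card_filter_range, ← hcard]
  have start_le : ∀ x, InCopy p x → p (lastCopy p x) ≤ x := fun x hx =>
    start_lastCopy_le (by have := hx.1; omega)
  refine Finset.card_le_card_of_injOn (fun x => (lastCopy p x, x - p (lastCopy p x))) ?_ ?_
  · intro x hx
    obtain ⟨hxq, hx⟩ := Finset.mem_filter.1 hx
    have hle : lastCopy p x ≤ lastCopy p q := lastCopy_mono p (Finset.mem_range.1 hxq).le
    have := hx.1
    have := hx.2
    simp only [Finset.coe_product, Finset.coe_Ioc, Finset.coe_range, mem_prod, mem_Ioc, mem_Iio]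
    omega
  · intro x hx y hy hxy
    obtain ⟨hlast, hoffset⟩ := Prod.mk.inj hxy
    have hx := start_le x (Finset.mem_filter.1 hx).2
    have hy := start_le y (Finset.mem_filter.1 hy).2
    rw [hlast] at hx hoffset
    omega

lemma count_inCopy_add_count_not (p : ℕ → ℕ) (q : ℕ) :
    Nat.count (InCopy p) q + Nat.count (fun i => ¬ InCopy p i) q = q := by
  rw [Nat.count_eq_card_filter_range, Nat.count_eq_card_filter_range,
    Finset.card_filter_add_card_filter_not, Finset.card_range]

lemma exists_mul_sub_le_count_not_inCopy {θ : ℝ} (hθ : θ < 1)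
    (hsparse : (fun k : ℕ => (k : ℝ) * (k + 1)) =o[atTop] fun k => (p k : ℝ)) :
    ∃ C : ℝ, ∀ q : ℕ, θ * q - C ≤ Nat.count (fun i => ¬ InCopy p i) q := by
  obtain ⟨K, hK⟩ := eventually_atTop.1 (hsparse.bound (sub_pos.2 hθ))
  refine ⟨K * (K + 1), fun q => ?_⟩
  suffices (Nat.count (InCopy p) q : ℝ) ≤ K * (K + 1) + (1 - θ) * q by
    have hsum : (Nat.count (InCopy p) q : ℝ) + Nat.count (fun i => ¬ InCopy p i) q = q :=
      mod_cast count_inCopy_add_count_not p q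
    linarith
  have hcount : (Nat.count (InCopy p) q : ℝ) ≤ lastCopy p q * (lastCopy p q + 1) :=
    mod_cast count_inCopy_le p q
  refine hcount.trans ?_
  have hθ' : 0 ≤ 1 - θ := (sub_pos.2 hθ).le
  rcases le_or_gt (lastCopy p q) K with hle | hlt
  · have : (lastCopy p q : ℝ) ≤ K := mod_cast hle
    exact le_add_of_le_of_nonneg (by gcongr) (mul_nonneg hθ' q.cast_nonneg)
  · have hbound := hK _ hlt.le
    rw [Real.norm_of_nonneg (by positivity), Real.norm_natCast] at hbound
    have : (p (lastCopy p q) : ℝ) ≤ q :=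
      mod_cast start_lastCopy_le (Nat.ne_zero_of_lt hlt)
    exact le_add_of_nonneg_of_le (by positivity)
      (hbound.trans (mul_le_mul_of_nonneg_left this hθ'))

end Plant

/-! ### Waiting times of coded pairs -/

/-- The first `n` terms of `B` occur in `A` at position `m`. -/
def OccursAt (A B : ℕ → ℤ) (n m : ℕ) : Prop := ∀ i < n, A (m + i) = B i

section Occurrences

variable {A B : ℕ → ℤ} {n n' m m' z : ℕ}

lemma OccursAt.mono (h : OccursAt A B n m) (hle : n' ≤ n) : OccursAt A B n' m :=
  fun i hi => h i (hi.trans_le hle)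

lemma OccursAt.add_lt_of_lt (h : OccursAt A B n m) (h' : OccursAt A B n m') (hlt : m < m')
    (hzn : z < n) (hz : B z ≠ 0) (hbefore : ∀ i < z, B i = 0) : m + z < m' := by
  by_contra! hle
  refine hz ?_
  rw [← h z hzn, show m + z = m' + (m + z - m') by omega, h' _ (by omega)]
  exact hbefore _ (by omega)

lemma exists_waitingRatio_eq {β x y : ℝ} (hm : 1 ≤ m)
    (h : OccursAt (betaDigit β x) (betaDigit β y) n m) :
    ∃ w ≤ m, OccursAt (betaDigit β x) (betaDigit β y) n w ∧
      waitingRatio β x y n = ((Real.log w / n : ℝ) : EReal) := by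
  classical
  have hex : ∃ w, 1 ≤ w ∧ OccursAt (betaDigit β x) (betaDigit β y) n w := ⟨m, hm, h⟩
  obtain ⟨hpos, hocc⟩ := Nat.find_spec hex
  have htime : waitingTime β x y n = (Nat.find hex : ℕ∞) := by
    refine le_antisymm (sInf_le ⟨_, rfl, hpos, fun i hi => ?_⟩) (le_sInf ?_)
    · rw [betaDigit_iterate, hocc i hi]
    · rintro _ ⟨k, rfl, hk, hdigits⟩
      refine Nat.cast_le.2 (Nat.find_min' hex ⟨hk, fun i hi => ?_⟩)
      rw [← betaDigit_iterate, hdigits i hi]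
  refine ⟨Nat.find hex, Nat.find_min' hex ⟨hm, h⟩, hocc, ?_⟩
  simp only [waitingRatio, htime, ENat.natCast_ne_top, dite_false]
  rfl

end Occurrences

/-- The pair of points coded by two sequences of nonzero full blocks: `η` codes the second point,
and `ξ` fills the blocks of the first point that are not occupied by the copies of the second point
planted at the block positions `p k`. -/
noncomputable def codedPair (β : ℝ) (N : ℕ) (p : ℕ → ℕ) (ξ η : ℕ → ℝ) : ℝ × ℝ :=
  (blockSum β (N + 1) (plant p ξ (zeroPad η)), blockSum β (N + 1) (zeroPad η))

section CodedPair

variable {β : ℝ} {N k m n : ℕ} {p : ℕ → ℕ} {ξ η c c' : ℕ → ℝ}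

lemma isFullStart_zeroPad (hβ : 1 < β) (hη : ∀ i, IsFullStart β N (η i)) (i : ℕ) :
    IsFullStart β N (zeroPad η i) := by
  unfold zeroPad
  split_ifs
  exacts [.zero hβ N, hη _]

lemma isFullStart_plant (hβ : 1 < β) (hξ : ∀ i, IsFullStart β N (ξ i))
    (hc : ∀ i, IsFullStart β N (c i)) (i : ℕ) : IsFullStart β N (plant p ξ c i) := by
  unfold plant
  split_ifs
  exacts [hc _, .zero hβ N, hξ _]

lemma occursAt_blockSum (hβ : 1 < β) (hc : ∀ i, IsFullStart β N (c i))
    (hc' : ∀ i, IsFullStart β N (c' i)) {q : ℕ} (h : ∀ i < k, c (q + i) = c' i) :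
    OccursAt (betaDigit β (blockSum β (N + 1) c)) (betaDigit β (blockSum β (N + 1) c'))
      (k * (N + 1)) (q * (N + 1)) := by
  intro i hi
  have hblock : i / (N + 1) < k := Nat.div_lt_of_lt_mul (by linarith)
  have hoffset : i % (N + 1) < N + 1 := Nat.mod_lt i N.succ_pos
  rw [← Nat.div_add_mod' i (N + 1), betaDigit_blockSum hβ hc' _ hoffset, ← add_assoc,
    ← Nat.add_mul, betaDigit_blockSum hβ hc _ hoffset, h _ hblock]

lemma betaDigit_blockSum_zeroPad_eq_zero (hβ : 1 < β) (hη : ∀ i, IsFullStart β N (η i)) {i : ℕ}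
    (hi : i < 3 * (N + 1)) : betaDigit β (blockSum β (N + 1) (zeroPad η)) i = 0 := by
  have hblock : i / (N + 1) < 3 := Nat.div_lt_of_lt_mul (by linarith)
  rw [← Nat.div_add_mod' i (N + 1), betaDigit_blockSum hβ (isFullStart_zeroPad hβ hη) _
    (Nat.mod_lt i N.succ_pos), zeroPad, if_pos hblock, betaDigit_zero]

lemma exists_first_nonzero_digit (hβ : 1 < β) (hη : ∀ i, IsFullStart β N (η i))
    (hη0 : ∀ i, η i ≠ 0) :
    ∃ z, 3 * (N + 1) ≤ z ∧ z < 4 * (N + 1) ∧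
      betaDigit β (blockSum β (N + 1) (zeroPad η)) z ≠ 0 ∧
      ∀ i < z, betaDigit β (blockSum β (N + 1) (zeroPad η)) i = 0 := by
  classical
  obtain ⟨i, hi, hdigit⟩ : ∃ i < N + 1,
      betaDigit β (blockSum β (N + 1) (zeroPad η)) (3 * (N + 1) + i) ≠ 0 := by
    by_contra! h
    exact zeroPad_ne_zero hη0 le_rfl (block_eq_zero_of_digits hβ (isFullStart_zeroPad hβ hη) h)
  have hex : ∃ z, betaDigit β (blockSum β (N + 1) (zeroPad η)) z ≠ 0 := ⟨_, hdigit⟩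
  refine ⟨Nat.find hex, ?_, ?_, Nat.find_spec hex, fun j hj => not_not.1 (Nat.find_min hex hj)⟩
  · by_contra! h
    exact Nat.find_spec hex (betaDigit_blockSum_zeroPad_eq_zero hβ hη h)
  · have := Nat.find_min' hex hdigit
    omega

lemma occursAt_start (hβ : 1 < β) (hp : ∀ k, p k + k + 1 < p (k + 1))
    (hξ : ∀ i, IsFullStart β N (ξ i)) (hη : ∀ i, IsFullStart β N (η i)) (hk : 4 ≤ k) :
    OccursAt (betaDigit β (blockSum β (N + 1) (plant p ξ (zeroPad η))))
      (betaDigit β (blockSum β (N + 1) (zeroPad η))) (k * (N + 1)) (p k * (N + 1)) :=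
  have hY := isFullStart_zeroPad hβ hη
  occursAt_blockSum hβ (isFullStart_plant hβ hξ hY) hY fun i hi => by
    rw [plant_add hp hk hi.le, if_pos hi]

-- The block following the copy is `0`, while the corresponding block of the copied point is not.
lemma not_occursAt_start (hβ : 1 < β) (hp : ∀ k, p k + k + 1 < p (k + 1))
    (hξ : ∀ i, IsFullStart β N (ξ i)) (hη : ∀ i, IsFullStart β N (η i)) (hη0 : ∀ i, η i ≠ 0)
    (hk : 4 ≤ k) :
    ¬ OccursAt (betaDigit β (blockSum β (N + 1) (plant p ξ (zeroPad η))))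
      (betaDigit β (blockSum β (N + 1) (zeroPad η))) ((k + 1) * (N + 1)) (p k * (N + 1)) := by
  have hY := isFullStart_zeroPad hβ hη
  refine fun h => zeroPad_ne_zero hη0 (by omega : 3 ≤ k)
    (block_eq_zero_of_digits hβ hY fun i hi => ?_)
  rw [← h _ (by rw [Nat.succ_mul]; omega), ← add_assoc, ← Nat.add_mul,
    betaDigit_blockSum hβ (isFullStart_plant hβ hξ hY) _ hi, plant_add hp hk le_rfl,
    if_neg (lt_irrefl k), betaDigit_zero]

-- An occurrence contains two consecutive zero blocks, so it is near the start of some copy; as it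
-- extends beyond the first nonzero digit, it has to be that copy.
lemma exists_eq_start_of_occursAt (hβ : 1 < β) (hp : ∀ k, p k + k + 1 < p (k + 1))
    (hξ : ∀ i, IsFullStart β N (ξ i)) (hη : ∀ i, IsFullStart β N (η i))
    (hξ0 : ∀ i, ξ i ≠ 0) (hη0 : ∀ i, η i ≠ 0)
    (h : OccursAt (betaDigit β (blockSum β (N + 1) (plant p ξ (zeroPad η))))
      (betaDigit β (blockSum β (N + 1) (zeroPad η))) (4 * (N + 1)) m) :
    ∃ k, 4 ≤ k ∧ m = p k * (N + 1) := by
  have hX := isFullStart_plant (p := p) hβ hξ (isFullStart_zeroPad hβ hη)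
  obtain ⟨z, hz3, hz4, hz, hbefore⟩ := exists_first_nonzero_digit hβ hη hη0
  obtain ⟨q, hmq, hqm⟩ : ∃ q, m ≤ q * (N + 1) ∧ q * (N + 1) ≤ m + N := by
    refine ⟨(m + N) / (N + 1), ?_, Nat.div_mul_le_self _ _⟩
    have := Nat.div_add_mod' (m + N) (N + 1)
    have : (m + N) % (N + 1) < N + 1 := Nat.mod_lt _ N.succ_pos
    omega
  have zero_block : ∀ r, m ≤ r * (N + 1) → r * (N + 1) ≤ m + N + (N + 1) →
      plant p ξ (zeroPad η) r = 0 := fun r hmr hrm =>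
    block_eq_zero_of_digits hβ hX fun i hi => by
      rw [show r * (N + 1) + i = m + (r * (N + 1) - m + i) by omega, h _ (by omega)]
      exact hbefore _ (by omega)
  obtain ⟨k, hk, hqk⟩ := exists_start_of_plant_eq_zero hp hξ0 hη0 (zero_block q hmq (by omega))
    (zero_block (q + 1) (by rw [Nat.succ_mul]; omega) (by rw [Nat.succ_mul]; omega))
  have hcopy := (occursAt_start hβ hp hξ hη hk).mono (Nat.mul_le_mul_right (N + 1) hk)
  refine ⟨k, hk, ?_⟩
  have hdist : p k * (N + 1) ≤ m + N ∧ m ≤ p k * (N + 1) + (N + 1) := by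
    rcases hqk with rfl | rfl
    · omega
    · rw [Nat.succ_mul] at hmq hqm
      omega
  rcases lt_trichotomy m (p k * (N + 1)) with hlt | heq | hgt
  · have := h.add_lt_of_lt hcopy hlt hz4 hz hbefore
    omega
  · exact heq
  · have := hcopy.add_lt_of_lt h hgt hz4 hz hbefore
    omega

lemma exists_waitingRatio_codedPair_eq (hβ : 1 < β) (hp : ∀ k, p k + k + 1 < p (k + 1))
    (hξ : ∀ i, IsFullStart β N (ξ i)) (hη : ∀ i, IsFullStart β N (η i))
    (hξ0 : ∀ i, ξ i ≠ 0) (hη0 : ∀ i, η i ≠ 0) (hk : 4 ≤ k) (hlt : k * (N + 1) < n)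
    (hle : n ≤ (k + 1) * (N + 1)) :
    ∃ w : ℕ, p k * (N + 1) ≤ w ∧ w ≤ p (k + 1) * (N + 1) ∧
      waitingRatio β (codedPair β N p ξ η).1 (codedPair β N p ξ η).2 n =
        ((Real.log w / n : ℝ) : EReal) := by
  have hpos : 1 ≤ p (k + 1) * (N + 1) :=
    Nat.mul_pos ((Nat.zero_le _).trans_lt (hp k)) N.succ_pos
  obtain ⟨w, hw, hocc, hratio⟩ := exists_waitingRatio_eq hpos
    ((occursAt_start hβ hp hξ hη (by omega)).mono hle)
  refine ⟨w, ?_, hw, hratio⟩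
  obtain ⟨j, hj, rfl⟩ := exists_eq_start_of_occursAt hβ hp hξ hη hξ0 hη0
    (hocc.mono ((Nat.mul_le_mul_right (N + 1) hk).trans hlt.le))
  refine Nat.mul_le_mul_right _ ((strictMono_of_spaced hp).monotone (not_lt.1 fun hjk => ?_))
  exact not_occursAt_start hβ hp hξ hη hη0 hj
    (hocc.mono ((Nat.mul_le_mul_right (N + 1) hjk).trans hlt.le))

end CodedPair

/-! ### Oscillating growth rates -/

/-- A function with values in `[u, v]` oscillating so slowly that `t * osc u v t` is increasing and
Lipschitz, while every value in `[u, v]` is a cluster point. -/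
noncomputable def osc (u v t : ℝ) : ℝ := (u + v) / 2 + (v - u) / 2 * Real.sin (u / v * Real.log t)

section Oscillation

variable {u v s t : ℝ}

lemma osc_mem_Icc (huv : u ≤ v) (t : ℝ) : osc u v t ∈ Icc u v := by
  have hlow := Real.neg_one_le_sin (u / v * Real.log t)
  have hup := Real.sin_le_one (u / v * Real.log t)
  constructor <;> unfold osc <;> nlinarith

lemma hasDerivAt_mul_osc (ht : 0 < t) :
    HasDerivAt (fun t => t * osc u v t)
      (osc u v t + (v - u) / 2 * (u / v) * Real.cos (u / v * Real.log t)) t := by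
  have hlog : HasDerivAt (fun t => u / v * Real.log t) (u / v * t⁻¹) t :=
    (Real.hasDerivAt_log ht.ne').const_mul _
  have hosc := (hlog.sin.const_mul ((v - u) / 2)).const_add ((u + v) / 2)
  convert! (hasDerivAt_id t).mul hosc using 1
  simp only [osc, id]
  field_simp

lemma deriv_mul_osc_mem_Icc (hu : 0 < u) (huv : u ≤ v) (ht : 0 < t) :
    deriv (fun t => t * osc u v t) t ∈ Icc (u / 2) (2 * v) := by
  have hv : 0 < v := hu.trans_le huv
  have hamp : (v - u) / 2 * (u / v) ≤ u / 2 := by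
    rw [div_mul_div_comm, div_le_div_iff₀ (by positivity) (by positivity)]
    nlinarith [mul_pos hu hu]
  have hamp0 : 0 ≤ (v - u) / 2 * (u / v) := mul_nonneg (by linarith) (by positivity)
  obtain ⟨hosc, hosc'⟩ := osc_mem_Icc huv t
  have hcos := Real.neg_one_le_cos (u / v * Real.log t)
  have hcos' := Real.cos_le_one (u / v * Real.log t)
  rw [(hasDerivAt_mul_osc ht).deriv]
  constructor <;> nlinarith

lemma mul_osc_sub_mem_Icc (hu : 0 < u) (huv : u ≤ v) (hs : 0 ≤ s) (hst : s ≤ t) :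
    t * osc u v t - s * osc u v s ∈ Icc (u / 2 * (t - s)) (2 * v * (t - s)) := by
  rcases hs.eq_or_lt with rfl | hs
  · obtain ⟨hlow, hup⟩ := osc_mem_Icc huv t
    constructor <;> nlinarith
  have hcont : ContinuousOn (fun t => t * osc u v t) (Ioi 0) := fun x hx =>
    (hasDerivAt_mul_osc hx).continuousAt.continuousWithinAt
  have hdiff : DifferentiableOn ℝ (fun t => t * osc u v t) (interior (Ioi 0)) := fun x hx =>
    (hasDerivAt_mul_osc (interior_subset hx)).differentiableAt.differentiableWithinAt
  have hderiv : ∀ x ∈ interior (Ioi (0 : ℝ)), _ := fun x hx =>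
    deriv_mul_osc_mem_Icc hu huv (interior_subset hx)
  exact ⟨(convex_Ioi 0).mul_sub_le_image_sub_of_le_deriv hcont hdiff
      (fun x hx => (hderiv x hx).1) s hs t (hs.trans_le hst) hst,
    (convex_Ioi 0).image_sub_le_mul_sub_of_deriv_le hcont hdiff
      (fun x hx => (hderiv x hx).2) s hs t (hs.trans_le hst) hst⟩

lemma exists_affine_sin_eq (hs : s ∈ Icc u v) :
    ∃ θ, (u + v) / 2 + (v - u) / 2 * Real.sin θ = s := by
  rcases (hs.1.trans hs.2).eq_or_lt with rfl | huv
  · exact ⟨0, by linarith [hs.1, hs.2]⟩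
  · have hpos : 0 < (v - u) / 2 := by linarith
    refine ⟨Real.arcsin ((s - (u + v) / 2) / ((v - u) / 2)), ?_⟩
    rw [Real.sin_arcsin, mul_div_cancel₀ _ hpos.ne', add_sub_cancel]
    · rw [le_div_iff₀ hpos]; linarith [hs.1]
    · rw [div_le_iff₀ hpos]; linarith [hs.2]

lemma exists_osc_eq_tendsto (hu : 0 < u) (hs : s ∈ Icc u v) :
    ∃ t : ℕ → ℝ, (∀ k, 0 < t k ∧ osc u v (t k) = s) ∧ Tendsto t atTop atTop := by
  have huv : 0 < u / v := div_pos hu (hu.trans_le (hs.1.trans hs.2))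
  obtain ⟨θ, hθ⟩ := exists_affine_sin_eq hs
  refine ⟨fun k => Real.exp ((θ + k * (2 * Real.pi)) / (u / v)),
    fun k => ⟨Real.exp_pos _, ?_⟩, Real.tendsto_exp_atTop.comp ?_⟩
  · rw [osc, Real.log_exp, mul_div_cancel₀ _ huv.ne', Real.sin_add_nat_mul_two_pi, hθ]
  · exact (tendsto_atTop_add_const_left _ _
      (tendsto_natCast_atTop_atTop.atTop_mul_const (by positivity))).atTop_div_const huv

lemma mapClusterPt_osc (hu : 0 < u) (hs : s ∈ Icc u v) :
    MapClusterPt s atTop fun n : ℕ => osc u v n := by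
  have huv : u ≤ v := hs.1.trans hs.2
  obtain ⟨t, ht, htop⟩ := exists_osc_eq_tendsto hu hs
  have hceil : Tendsto (fun k => ⌈t k⌉₊) atTop atTop := tendsto_nat_ceil_atTop.comp htop
  refine MapClusterPt.of_comp hceil (Tendsto.mapClusterPt ?_)
  have hclose : ∀ k, dist (osc u v ⌈t k⌉₊) s ≤ 2 * v / ⌈t k⌉₊ := fun k => by
    obtain ⟨hpos, hval⟩ := ht k
    have hle : t k ≤ ⌈t k⌉₊ := Nat.le_ceil _
    have hlt : (⌈t k⌉₊ : ℝ) < t k + 1 := Nat.ceil_lt_add_one hpos.le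
    obtain ⟨hlow, hup⟩ := mul_osc_sub_mem_Icc hu huv hpos.le hle
    rw [hval] at hlow hup
    have hceil_pos : (0 : ℝ) < ⌈t k⌉₊ := hpos.trans_le hle
    have habs : |osc u v ⌈t k⌉₊ - s| * ⌈t k⌉₊ = |(osc u v ⌈t k⌉₊ - s) * ⌈t k⌉₊| := by
      rw [abs_mul, abs_of_pos hceil_pos]
    rw [Real.dist_eq, le_div_iff₀ hceil_pos, habs, abs_le]
    constructor <;> nlinarith [hs.1, hs.2]
  exact tendsto_iff_dist_tendsto_zero.2 <| squeeze_zero (fun _ => dist_nonneg) hclose <|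
    (tendsto_const_div_atTop_nhds_zero_nat (2 * v)).comp hceil

end Oscillation

lemma setOf_mapClusterPt_eq_image_coe {u v : ℝ} {a : ℕ → EReal} {b ε : ℕ → ℝ}
    (hε : Tendsto ε atTop (nhds 0)) (hab : ∀ᶠ n in atTop, ∃ t : ℝ, a n = t ∧ |t - b n| ≤ ε n)
    (hb : ∀ n, b n ∈ Icc u v) (hcluster : ∀ s ∈ Icc u v, MapClusterPt s atTop b) :
    {t : EReal | MapClusterPt t atTop a} = Real.toEReal '' Icc u v := by
  have transfer : ∀ {φ : ℕ → ℕ} {s : ℝ}, Tendsto φ atTop atTop →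
      Tendsto (b ∘ φ) atTop (nhds s) → Tendsto (a ∘ φ) atTop (nhds s) := fun {φ s} hφ hbφ => by
    have hdiff : Tendsto (fun k => (a (φ k)).toReal - b (φ k)) atTop (nhds 0) := by
      refine squeeze_zero_norm' ?_ (hε.comp hφ)
      filter_upwards [hφ.eventually hab] with k hk
      obtain ⟨t, ht, hle⟩ := hk
      rwa [ht, EReal.toReal_coe]
    have hreal : Tendsto (fun k => (a (φ k)).toReal) atTop (nhds s) := by
      simpa using hdiff.add hbφ
    refine ((continuous_coe_real_ereal.tendsto s).comp hreal).congr' ?_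
    filter_upwards [hφ.eventually hab] with k hk
    obtain ⟨t, ht, -⟩ := hk
    simp only [Function.comp_apply, ht, EReal.toReal_coe]
  ext t
  constructor
  · intro ht
    obtain ⟨φ, hφ, haφ⟩ := ht.tendsto_subseq
    obtain ⟨s, hs, ψ, hψ, hbs⟩ := isCompact_Icc.tendsto_subseq fun k => hb (φ k)
    exact ⟨s, hs, tendsto_nhds_unique (transfer (hφ.comp hψ).tendsto_atTop hbs)
      (haφ.comp hψ.tendsto_atTop)⟩
  · rintro ⟨s, hs, rfl⟩
    obtain ⟨φ, hφ, hbφ⟩ := (hcluster s hs).tendsto_subseq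
    exact .of_comp hφ.tendsto_atTop (transfer hφ.tendsto_atTop hbφ).mapClusterPt

section Positions

variable {G : ℕ → ℝ} {δ : ℝ}

lemma mul_natCast_le_of_add_le_succ (h₀ : 0 ≤ G 0) (hG : ∀ k, G k + δ ≤ G (k + 1)) (k : ℕ) :
    δ * k ≤ G k := by
  induction k with
  | zero => simpa using h₀
  | succ k ih => push_cast; linarith [hG k]

lemma exists_spaced_near_exp (hδ : 0 < δ) (h₀ : 0 ≤ G 0) (hG : ∀ k, G k + δ ≤ G (k + 1)) :
    ∃ (p : ℕ → ℕ) (K : ℝ), (∀ k, p k + k + 1 < p (k + 1)) ∧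
      ∀ k, Real.exp (G k) ≤ p k ∧ p k ≤ K * Real.exp (G k) := by
  -- The constant makes `C * δ * (1 + δ * k) ≥ k + 2`.
  set C : ℝ := 1 + (2 + 1 / δ) / δ with hC
  have hCδ : C * δ = δ + 2 + 1 / δ := by rw [hC]; field_simp; ring
  have hlin : ∀ k, 1 + δ * k ≤ Real.exp (G k) := fun k => by
    linarith [Real.add_one_le_exp (G k), mul_natCast_le_of_add_le_succ h₀ hG k]
  have hC1 : 1 ≤ C := le_add_of_nonneg_right (by positivity)
  refine ⟨fun k => ⌈C * Real.exp (G k)⌉₊, C + 1, fun k => ?_, fun k => ⟨?_, ?_⟩⟩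
  · have hceil := Nat.ceil_lt_add_one (mul_nonneg (by linarith) (Real.exp_pos (G k)).le : 0 ≤ C * _)
    have hgrow : Real.exp (G k) * (1 + δ) ≤ Real.exp (G (k + 1)) :=
      calc Real.exp (G k) * (1 + δ) ≤ Real.exp (G k) * Real.exp δ := by
            gcongr; linarith [Real.add_one_le_exp δ]
        _ = Real.exp (G k + δ) := (Real.exp_add _ _).symm
        _ ≤ Real.exp (G (k + 1)) := Real.exp_le_exp.2 (hG k)
    have hgap : (k : ℝ) + 2 ≤ C * δ * Real.exp (G k) :=
      calc (k : ℝ) + 2 ≤ C * δ * (1 + δ * k) := by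
            have : 1 / δ * (δ * k) = k := by field_simp
            have : 0 ≤ 1 / δ := by positivity
            have : 0 ≤ δ * k := by positivity
            rw [hCδ]; nlinarith
        _ ≤ C * δ * Real.exp (G k) := by gcongr; exact hlin k
    refine Nat.lt_ceil.2 ?_
    push_cast
    nlinarith
  · exact (le_mul_of_one_le_left (Real.exp_pos _).le hC1).trans (Nat.le_ceil _)
  · have : 1 ≤ Real.exp (G k) := le_trans (le_add_of_nonneg_right (by positivity)) (hlin k)
    linarith [Nat.ceil_lt_add_one (by positivity : 0 ≤ C * Real.exp (G k))]

lemma isLittleO_of_exp_mul_le {p : ℕ → ℕ} (hδ : 0 < δ) (hp : ∀ k : ℕ, Real.exp (δ * k) ≤ p k) :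
    (fun k : ℕ => (k : ℝ) * (k + 1)) =o[atTop] fun k => (p k : ℝ) := by
  have hpoly : (fun x : ℝ => x * (x + 1)) =o[atTop] fun x => Real.exp (δ * x) := by
    simpa only [pow_one, mul_add_one, sq] using
      (isLittleO_pow_exp_pos_mul_atTop 2 hδ).add (isLittleO_pow_exp_pos_mul_atTop 1 hδ)
  refine (hpoly.comp_tendsto tendsto_natCast_atTop_atTop).trans_isBigO (.of_norm_le fun k => ?_)
  simpa using hp k

end Positions

lemma abs_log_sub_mul_osc_le {u v a b t w M : ℝ} (hu : 0 < u) (huv : u ≤ v) (ha : 0 ≤ a)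
    (hat : a ≤ t) (htb : t ≤ b) (hlow : Real.exp (a * osc u v a) ≤ w)
    (hup : w ≤ M * Real.exp (b * osc u v b)) :
    |Real.log w - t * osc u v t| ≤ 2 * v * (b - a) + |Real.log M| := by
  have hv : 0 < v := hu.trans_le huv
  have hw : 0 < w := (Real.exp_pos _).trans_le hlow
  have hM : 0 < M := pos_of_mul_pos_left (hw.trans_le hup) (Real.exp_pos _).le
  have hlog_low : a * osc u v a ≤ Real.log w := (Real.le_log_iff_exp_le hw).2 hlow
  have hlog_up : Real.log w ≤ Real.log M + b * osc u v b := by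
    rw [← Real.log_exp (b * osc u v b), ← Real.log_mul hM.ne' (Real.exp_pos _).ne']
    exact Real.log_le_log hw hup
  have hta := (mul_osc_sub_mem_Icc hu huv ha hat).2
  have hbt := (mul_osc_sub_mem_Icc hu huv (ha.trans hat) htb).2
  have hta' : 2 * v * (t - a) ≤ 2 * v * (b - a) := by gcongr
  have hbt' : 2 * v * (b - t) ≤ 2 * v * (b - a) := by gcongr
  rw [abs_le]
  constructor <;> linarith [le_abs_self (Real.log M), abs_nonneg (Real.log M)]

lemma exists_copy_positions {u v : ℝ} (hu : 0 < u) (huv : u ≤ v) (N : ℕ) :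
    ∃ (p : ℕ → ℕ) (K : ℝ), (∀ k, p k + k + 1 < p (k + 1)) ∧
      ((fun k : ℕ => (k : ℝ) * (k + 1)) =o[atTop] fun k => (p k : ℝ)) ∧
      ∀ k n w : ℕ, k * (N + 1) ≤ n → n ≤ (k + 1) * (N + 1) → p k * (N + 1) ≤ w →
        w ≤ p (k + 1) * (N + 1) → |Real.log w - n * osc u v n| ≤ K := by
  set G : ℕ → ℝ := fun k => ((k * (N + 1) : ℕ) : ℝ) * osc u v (k * (N + 1) : ℕ) with hG
  have hstep : ∀ k : ℕ, (((k + 1) * (N + 1) : ℕ) : ℝ) - (k * (N + 1) : ℕ) = N + 1 := fun k => by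
    push_cast; ring
  have hgrow : ∀ k, G k + u / 2 ≤ G (k + 1) := fun k => by
    have hincr := (mul_osc_sub_mem_Icc hu huv (Nat.cast_nonneg (k * (N + 1)))
      (Nat.cast_le.2 (Nat.mul_le_mul_right (N + 1) k.le_succ))).1
    rw [hstep] at hincr
    have : (0 : ℝ) ≤ u / 2 * N := by positivity
    linarith
  have hG0 : 0 ≤ G 0 := by simp [hG]
  obtain ⟨p, K, hp, hexp⟩ := exists_spaced_near_exp (half_pos hu) hG0 hgrow
  refine ⟨p, 2 * v * (N + 1) + |Real.log (K * (N + 1))|, hp,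
    isLittleO_of_exp_mul_le (half_pos hu) fun k => (Real.exp_le_exp.2
      (mul_natCast_le_of_add_le_succ hG0 hgrow k)).trans (hexp k).1,
    fun k n w hkn hnk hkw hwk => ?_⟩
  have hbound := abs_log_sub_mul_osc_le (w := w) (M := K * (N + 1)) hu huv (Nat.cast_nonneg _)
    (Nat.cast_le.2 hkn) (Nat.cast_le.2 hnk) ((hexp k).1.trans ?_) ?_
  · rwa [hstep] at hbound
  · exact Nat.cast_le.2 ((Nat.le_mul_of_pos_right _ N.succ_pos).trans hkw)
  · calc (w : ℝ) ≤ p (k + 1) * (N + 1) := mod_cast hwk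
      _ ≤ K * Real.exp (G (k + 1)) * (N + 1) := by gcongr; exact (hexp (k + 1)).2
      _ = K * (N + 1) * Real.exp (G (k + 1)) := by ring

/-- The set `E^β(J)` for `J = [u, v]`: the pairs of points whose sequence of waiting ratios has
`[u, v]` as its set of accumulation points, taken in `EReal` so that no accumulation point is lost
at infinity. -/
def accumulationPairs (β u v : ℝ) : Set (ℝ × ℝ) :=
  {p | p.1 ∈ Ico (0 : ℝ) 1 ∧ p.2 ∈ Ico (0 : ℝ) 1 ∧
    {t : EReal | MapClusterPt t atTop fun n => waitingRatio β p.1 p.2 n} =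
      Real.toEReal '' Icc u v}

lemma codedPair_mem_accumulationPairs {β u v K : ℝ} {N : ℕ} {p : ℕ → ℕ} {ξ η : ℕ → ℝ}
    (hβ : 1 < β) (hu : 0 < u) (huv : u ≤ v) (hp : ∀ k, p k + k + 1 < p (k + 1))
    (hlog : ∀ k n w : ℕ, k * (N + 1) ≤ n → n ≤ (k + 1) * (N + 1) → p k * (N + 1) ≤ w →
      w ≤ p (k + 1) * (N + 1) → |Real.log w - n * osc u v n| ≤ K)
    (hξ : ∀ i, IsFullStart β N (ξ i) ∧ ξ i ≠ 0) (hη : ∀ i, IsFullStart β N (η i) ∧ η i ≠ 0) :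
    codedPair β N p ξ η ∈ accumulationPairs β u v := by
  have hY := isFullStart_zeroPad hβ fun i => (hη i).1
  refine ⟨blockSum_mem_Ico hβ (isFullStart_plant hβ (fun i => (hξ i).1) hY),
    blockSum_mem_Ico hβ hY, setOf_mapClusterPt_eq_image_coe
      (tendsto_const_div_atTop_nhds_zero_nat K) ?_ (fun n => osc_mem_Icc huv n)
      fun s hs => mapClusterPt_osc hu hs⟩
  filter_upwards [eventually_gt_atTop (4 * (N + 1))] with n hn
  obtain ⟨k, hk, hlt, hle⟩ : ∃ k, 4 ≤ k ∧ k * (N + 1) < n ∧ n ≤ (k + 1) * (N + 1) := by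
    have hdiv := Nat.div_add_mod' (n - 1) (N + 1)
    have hmod : (n - 1) % (N + 1) < N + 1 := Nat.mod_lt _ N.succ_pos
    refine ⟨(n - 1) / (N + 1), (Nat.le_div_iff_mul_le N.succ_pos).2 (by omega), by omega, ?_⟩
    rw [Nat.succ_mul]
    omega
  obtain ⟨w, hkw, hwk, hratio⟩ := exists_waitingRatio_codedPair_eq hβ hp (fun i => (hξ i).1)
    (fun i => (hη i).1) (fun i => (hξ i).2) (fun i => (hη i).2) hk hlt hle
  have hn_pos : (0 : ℝ) < n := Nat.cast_pos.2 (by omega)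
  refine ⟨_, hratio, ?_⟩
  rw [div_sub' hn_pos.ne', abs_div, abs_of_pos hn_pos]
  exact div_le_div_of_nonneg_right (hlog k n w hlt.le hle hkw hwk) hn_pos.le

/-! ### Dimension of the set of coded pairs -/

lemma dimH_range_le_div {ι X Y : Type*} [MetricSpace X] [MetricSpace Y] {g : ι → X} {h : ι → Y}
    {C r : NNReal} (hr : 0 < r)
    (hgh : ∀ i j, dist (h i) (h j) ≤ C * dist (g i) (g j) ^ (r : ℝ)) :
    dimH (range h) ≤ dimH (range g) / r := by
  rcases isEmpty_or_nonempty ι with hι | hι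
  · simp only [range_eq_empty, dimH_empty, zero_le]
  have hinv : ∀ i, h (Function.invFun g (g i)) = h i := fun i => dist_le_zero.1 <|
    (hgh _ i).trans_eq <| by
      rw [Function.invFun_eq (f := g) ⟨i, rfl⟩, dist_self, Real.zero_rpow (NNReal.coe_pos.2 hr).ne',
        mul_zero]
  have hholder : HolderOnWith C r (h ∘ Function.invFun g) (range g) := by
    rintro _ ⟨i, rfl⟩ _ ⟨j, rfl⟩
    simp only [Function.comp_apply, hinv]
    rw [edist_dist, edist_dist, ENNReal.ofReal_rpow_of_nonneg dist_nonneg r.coe_nonneg,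
      ← ENNReal.ofReal_coe_nnreal, ← ENNReal.ofReal_mul C.coe_nonneg]
    exact ENNReal.ofReal_le_ofReal (hgh i j)
  have himage : (h ∘ Function.invFun g) '' range g = range h := by
    rw [← range_comp]
    exact congrArg range (funext hinv)
  exact himage ▸ hholder.dimH_image_le hr

lemma inv_pow_le_mul_inv_pow_rpow {b θ M C : ℝ} {n q : ℕ} (hb : 0 < b) (hθ : 0 ≤ θ) (hM1 : 1 ≤ M)
    (hM : b ^ θ ≤ M) (hn : θ * q - C ≤ n) :
    (M ^ n)⁻¹ ≤ M ^ C * (b ^ q)⁻¹ ^ (θ * θ) := by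
  have hM0 : 0 < M := zero_lt_one.trans_le hM1
  have hpow : (b ^ q) ^ (θ * θ) ≤ M ^ n * M ^ C :=
    calc (b ^ q) ^ (θ * θ) = (b ^ θ) ^ (θ * q) := by
          rw [← Real.rpow_natCast, ← Real.rpow_mul hb.le, ← Real.rpow_mul hb.le]
          congr 1; ring
      _ ≤ M ^ (θ * q) := Real.rpow_le_rpow (by positivity) hM (by positivity)
      _ ≤ M ^ (n + C) := Real.rpow_le_rpow_of_exponent_le hM1 (by linarith)
      _ = M ^ n * M ^ C := by rw [Real.rpow_add hM0, Real.rpow_natCast]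
  rw [Real.inv_rpow (by positivity), ← div_eq_mul_inv, le_div_iff₀ (by positivity),
    inv_mul_le_iff₀ (by positivity)]
  exact hpow

lemma exists_pow_rpow_add_one_le_ncard {β θ : ℝ} (hβ : 1 < β) (hθ0 : 0 < θ) (hθ1 : θ < 1) :
    ∃ N, (β ^ (N + 1)) ^ θ + 1 ≤ ({a | IsFullStart β N a}.ncard : ℝ) := by
  have hβ0 : 0 < β := zero_lt_one.trans hβ
  have hβθ : 1 < β ^ θ := Real.one_lt_rpow hβ hθ0
  have hlt : ‖β ^ θ‖ < β := by
    rw [Real.norm_of_nonneg (by positivity)]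
    exact (Real.rpow_lt_rpow_of_exponent_lt hβ hθ1).trans_eq (Real.rpow_one β)
  obtain ⟨N, hN, hN1⟩ := (((isLittleO_pow_const_mul_const_pow_const_pow_of_norm_lt 1 hlt).bound
    (by positivity : 0 < (4 * β ^ θ)⁻¹)).and (eventually_ge_atTop 1)).exists
  rw [Real.norm_of_nonneg (by positivity), Real.norm_of_nonneg (by positivity), pow_one,
    inv_mul_eq_div, le_div_iff₀ (by positivity)] at hN
  have hpow : (β ^ (N + 1)) ^ θ = (β ^ θ) ^ N * β ^ θ := by
    rw [← Real.rpow_natCast, ← Real.rpow_mul hβ0.le, mul_comm, Real.rpow_mul hβ0.le,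
      Real.rpow_natCast, pow_succ]
  have hone : 1 ≤ (β ^ θ) ^ N * β ^ θ := one_le_mul_of_one_le_of_one_le
    (one_le_pow₀ hβθ.le) hβθ.le
  have hN1' : (1 : ℝ) ≤ N := mod_cast hN1
  refine ⟨N, le_of_mul_le_mul_left ?_ (by positivity : (0 : ℝ) < N + 1)⟩
  calc ((N : ℝ) + 1) * ((β ^ (N + 1)) ^ θ + 1)
      ≤ (2 * N) * (2 * ((β ^ θ) ^ N * β ^ θ)) := by
        rw [hpow]; gcongr <;> linarith
    _ = N * (β ^ θ) ^ N * (4 * β ^ θ) := by ring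
    _ ≤ β ^ N := hN
    _ ≤ (N + 1) * {a | IsFullStart β N a}.ncard := IsFullStart.pow_le_ncard hβ N

lemma exists_alphabet {β θ : ℝ} (hβ : 1 < β) (hθ0 : 0 < θ) (hθ1 : θ < 1) :
    ∃ (N M : ℕ) (e : Fin M → ℝ), 1 < M ∧ (β ^ (N + 1)) ^ θ ≤ M ∧ Function.Injective e ∧
      ∀ i, IsFullStart β N (e i) ∧ e i ≠ 0 := by
  obtain ⟨N, hN⟩ := exists_pow_rpow_add_one_le_ncard hβ hθ0 hθ1
  have hfin := IsFullStart.finite_setOf (zero_lt_one.trans hβ) N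
  have := (hfin.sdiff (t := {0})).to_subtype
  let e := (Finite.equivFin ↥({a | IsFullStart β N a} \ {0})).symm
  have hcard : (Nat.card ↥({a | IsFullStart β N a} \ {0}) : ℝ) + 1 =
      {a | IsFullStart β N a}.ncard := by
    rw [Nat.card_coe_set_eq]
    exact mod_cast ncard_sdiff_singleton_add_one (IsFullStart.zero hβ N) hfin
  have hone : 1 < (β ^ (N + 1)) ^ θ := Real.one_lt_rpow (one_lt_pow₀ hβ N.succ_ne_zero) hθ0
  exact ⟨N, _, fun i => e i, Nat.one_lt_cast (α := ℝ).1 (by linarith), by linarith,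
    Subtype.val_injective.comp e.injective, fun i => (e i).2⟩

lemma abs_ofDigits_sub_le {β θ C : ℝ} {N M : ℕ} (hβ : 1 < β) (hθ : 0 < θ) (hM1 : 1 < M)
    (hM : (β ^ (N + 1)) ^ θ ≤ M) {φ : ℕ → ℕ} (hφ : ∀ q : ℕ, θ * q - C ≤ φ q) {c c' : ℕ → ℝ}
    (hc : ∀ i, IsFullStart β N (c i)) (hc' : ∀ i, IsFullStart β N (c' i)) {a a' : ℕ → Fin M}
    (hagree : ∀ q, (∀ i < q, c i = c' i) → ∀ i < φ q, a i = a' i) :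
    |Real.ofDigits a - Real.ofDigits a'| ≤
      M ^ C / ((β ^ N)⁻¹ - (β ^ (N + 1))⁻¹) ^ (θ * θ) *
        |blockSum β (N + 1) c - blockSum β (N + 1) c'| ^ (θ * θ) :=
  le_mul_abs_blockSum_sub_rpow hβ (mul_pos hθ hθ) (by positivity) hc hc' fun q hq =>
    (Real.abs_ofDigits_sub_ofDigits_le (hagree q hq)).trans <|
      inv_pow_le_mul_inv_pow_rpow (by positivity) hθ.le (Nat.one_le_cast.2 hM1.le) hM (hφ q)

lemma exists_dist_ofDigits_le {β : ℝ} {θ : NNReal} {N M : ℕ} {p : ℕ → ℕ} {e : Fin M → ℝ}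
    (hβ : 1 < β) (hθ0 : 0 < θ) (hθ1 : θ < 1)
    (hsparse : (fun k : ℕ => (k : ℝ) * (k + 1)) =o[atTop] fun k => (p k : ℝ))
    (hM1 : 1 < M) (hM : (β ^ (N + 1)) ^ (θ : ℝ) ≤ M) (he : Function.Injective e)
    (hfull : ∀ i, IsFullStart β N (e i)) :
    ∃ C : NNReal, ∀ ω ω' : (ℕ → Fin M) × (ℕ → Fin M),
      dist (Real.ofDigits ω.1, Real.ofDigits ω.2) (Real.ofDigits ω'.1, Real.ofDigits ω'.2) ≤
        C * dist (codedPair β N p (e ∘ ω.1) (e ∘ ω.2)) (codedPair β N p (e ∘ ω'.1) (e ∘ ω'.2)) ^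
          ((θ * θ : NNReal) : ℝ) := by
  have hθ : (0 : ℝ) < θ := hθ0
  obtain ⟨C₁, hC₁⟩ := exists_mul_sub_le_count_not_inCopy (NNReal.coe_lt_one.2 hθ1) hsparse
  have hpad : ∀ q : ℕ, (θ : ℝ) * q - 3 ≤ (q - 3 : ℕ) := fun q => by
    have : (q : ℝ) ≤ (q - 3 : ℕ) + 3 := mod_cast le_tsub_add
    linarith [mul_le_of_le_one_left q.cast_nonneg (NNReal.coe_lt_one.2 hθ1).le]
  set gap := ((β ^ N)⁻¹ - (β ^ (N + 1))⁻¹) ^ ((θ : ℝ) * θ)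
  refine ⟨(max (M ^ C₁ / gap) (M ^ (3 : ℝ) / gap)).toNNReal, fun ω ω' => ?_⟩
  have hη : ∀ (τ : ℕ → Fin M) i, IsFullStart β N (zeroPad (e ∘ τ) i) := fun τ =>
    isFullStart_zeroPad hβ fun i => hfull (τ i)
  have hfst := abs_ofDigits_sub_le hβ hθ hM1 hM hC₁
    (isFullStart_plant (p := p) hβ (fun i => hfull (ω.1 i)) (hη ω.2))
    (isFullStart_plant hβ (fun i => hfull (ω'.1 i)) (hη ω'.2))
    fun q hq i hi => he (eq_of_plant_eq hq i hi)
  have hsnd := abs_ofDigits_sub_le hβ hθ hM1 hM hpad (hη ω.2) (hη ω'.2)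
    fun q hq i hi => he (eq_of_zeroPad_eq hq i hi)
  rw [Prod.dist_eq, NNReal.coe_mul]
  refine max_le (hfst.trans ?_) (hsnd.trans ?_)
  · gcongr
    exacts [(le_max_left _ _).trans (Real.le_coe_toNNReal _), le_max_left _ _]
  · gcongr
    exacts [(le_max_right _ _).trans (Real.le_coe_toNNReal _), le_max_right _ _]

lemma two_le_dimH_range_ofDigits {M : ℕ} (hM : 1 < M) :
    2 ≤ dimH (range fun ω : (ℕ → Fin M) × (ℕ → Fin M) =>
      (Real.ofDigits ω.1, Real.ofDigits ω.2)) := by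
  have hsquare : dimH (Icc (0 : ℝ) 1 ×ˢ Icc (0 : ℝ) 1) = 2 := by
    rw [Real.dimH_of_nonempty_interior]
    · simp
    · rw [interior_prod_eq, interior_Icc]
      exact (nonempty_Ioo.2 one_pos).prod (nonempty_Ioo.2 one_pos)
  rw [← hsquare]
  refine dimH_mono ?_
  rintro ⟨s, t⟩ ⟨hs, ht⟩
  obtain ⟨a, -, ha⟩ := Real.ofDigits_SurjOn hM hs
  obtain ⟨b, -, hb⟩ := Real.ofDigits_SurjOn hM ht
  exact ⟨(a, b), Prod.ext ha hb⟩

lemma sq_mul_two_le_dimH_accumulationPairs {β u v : ℝ} {θ : NNReal} (hβ : 1 < β) (hu : 0 < u)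
    (huv : u ≤ v) (hθ0 : 0 < θ) (hθ1 : θ < 1) :
    ((θ * θ : NNReal) : ENNReal) * 2 ≤ dimH (accumulationPairs β u v) := by
  obtain ⟨N, M, e, hM1, hM, he, hfull⟩ := exists_alphabet hβ (NNReal.coe_pos.2 hθ0)
    (NNReal.coe_lt_one.2 hθ1)
  obtain ⟨p, K, hp, hsparse, hlog⟩ := exists_copy_positions hu huv N
  obtain ⟨C, hC⟩ := exists_dist_ofDigits_le hβ hθ0 hθ1 hsparse hM1 hM he fun i => (hfull i).1
  have hθθ : 0 < θ * θ := mul_pos hθ0 hθ0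
  rw [mul_comm, ← ENNReal.le_div_iff_mul_le (.inl (ENNReal.coe_pos.2 hθθ).ne')
    (.inl ENNReal.coe_ne_top)]
  calc (2 : ENNReal)
      ≤ dimH (range fun ω : (ℕ → Fin M) × (ℕ → Fin M) =>
          (Real.ofDigits ω.1, Real.ofDigits ω.2)) := two_le_dimH_range_ofDigits hM1
    _ ≤ dimH (range fun ω : (ℕ → Fin M) × (ℕ → Fin M) =>
          codedPair β N p (e ∘ ω.1) (e ∘ ω.2)) / (θ * θ : NNReal) := dimH_range_le_div hθθ hC
    _ ≤ dimH (accumulationPairs β u v) / (θ * θ : NNReal) := by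
        refine ENNReal.div_le_div_right (dimH_mono (range_subset_iff.2 fun ω => ?_)) _
        exact codedPair_mem_accumulationPairs hβ hu huv hp hlog (fun i => hfull _)
          fun i => hfull _

lemma two_le_dimH_accumulationPairs {β u v : ℝ} (hβ : 1 < β) (hu : 0 < u) (huv : u ≤ v) :
    2 ≤ dimH (accumulationPairs β u v) := by
  refine ENNReal.le_of_forall_lt_one_mul_le fun r hr => ?_
  lift r to NNReal using (hr.trans ENNReal.one_lt_top).ne
  rcases eq_zero_or_pos r with rfl | hpos
  · simp
  rw [← NNReal.mul_self_sqrt r]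
  refine sq_mul_two_le_dimH_accumulationPairs hβ hu huv (NNReal.sqrt_pos.2 hpos) ?_
  rw [← NNReal.sqrt_one]
  exact NNReal.sqrt.strictMono (ENNReal.coe_lt_one_iff.1 hr)

/-- For a closed interval J ⊆ (0,∞), the set of pairs whose waiting-ratio accumulation
set is exactly J has Hausdorff dimension 2. -/
theorem dimH_accumulation_set (β : ℝ) (hβ : 1 < β) (u v : ℝ) (hu : 0 < u) (huv : u ≤ v) :
    dimH {p : ℝ × ℝ | p.1 ∈ Set.Ico (0:ℝ) 1 ∧ p.2 ∈ Set.Ico (0:ℝ) 1 ∧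
      {t : EReal | MapClusterPt t Filter.atTop (fun n => waitingRatio β p.1 p.2 n)} =
        Real.toEReal '' Set.Icc u v} = 2 := by
  refine le_antisymm ?_ (two_le_dimH_accumulationPairs hβ hu huv)
  refine (dimH_mono (subset_univ _)).trans_eq ?_
  rw [Real.dimH_univ_eq_finrank]
  simp only [Module.finrank_prod, Module.finrank_self, Nat.reduceAdd, Nat.cast_ofNat]
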